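/- Every Legendre multiplier sequence is a Hermite multiplier sequence: if (γ_k)_{k=0}^∞ is a Legendre multiplier sequence, then the linear operator on ℝ[x] sending the k-th Hermite polynomial He_k to γ_k·He_k maps hyperbolic polynomials to hyperbolic polynomials. -/

import Mathlib

open Polynomial

/-- A real polynomial is *hyperbolic* if all of its complex roots are real
(the zero polynomial and nonzero constants are vacuously hyperbolic). -/
def Hyperbolic (p : Polynomial ℝ) : Prop :=
  ∀ z ∈ (p.map (algebraMap ℝ ℂ)).roots, z.im = 0

/-- `γ` is a multiplier sequence for the simple set `q`: the linear operator
sending `q k` to `γ k • q k` maps hyperbolic polynomials to hyperbolic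
polynomials.  (Since `q` is a simple set, every real polynomial has a unique
expansion `∑ a k • q k`, so this quantification over coefficient families
expresses exactly that property.) -/
def IsMultiplierSeqFor (q : ℕ → Polynomial ℝ) (γ : ℕ → ℝ) : Prop :=
  ∀ (n : ℕ) (a : ℕ → ℝ),
    Hyperbolic (∑ k ∈ Finset.range n, C (a k) * q k) →
    Hyperbolic (∑ k ∈ Finset.range n, C (γ k * a k) * q k)

/-- The Legendre polynomials, via Rodrigues' formula
`Le n = (1/(2^n n!)) Dⁿ[(x²-1)ⁿ]`. -/
noncomputable def legendre (n : ℕ) : Polynomial ℝ :=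
  C (1 / (2 ^ n * n.factorial : ℝ)) * derivative^[n] ((X ^ 2 - 1) ^ n)

/-- A Legendre multiplier sequence. -/
def IsLegendreMS (γ : ℕ → ℝ) : Prop := IsMultiplierSeqFor legendre γ

/-- The (probabilists') Hermite polynomials, as real polynomials. -/
noncomputable def hermiteR (n : ℕ) : Polynomial ℝ :=
  (Polynomial.hermite n).map (Int.castRingHom ℝ)


/-- Stable (or zero) complex polynomials: no zeros in the open upper half plane. -/
def St (p : ℂ[X]) : Prop := p = 0 ∨ ∀ z : ℂ, 0 < z.im → p.eval z ≠ 0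

lemma hyp_iff (p : ℝ[X]) : Hyperbolic p ↔ p = 0 ∨ ∀ z : ℂ, aeval z p = 0 → z.im = 0 := by
  unfold Hyperbolic
  by_cases hp : p = 0
  · simp [hp]
  · have : p.map (algebraMap ℝ ℂ) ≠ 0 := by
      simpa using (Polynomial.map_ne_zero (f := algebraMap ℝ ℂ) hp)
    simp only [hp, false_or]
    apply forall_congr'
    intro z
    rw [mem_roots this, IsRoot.def, eval_map_algebraMap]

lemma hyp_iff_st (p : ℝ[X]) : Hyperbolic p ↔ St (p.map (algebraMap ℝ ℂ)) := by
  rw [hyp_iff, St, Polynomial.map_eq_zero]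
  apply or_congr_right
  simp only [eval_map_algebraMap]
  constructor
  · intro h z hz h0
    exact hz.ne' (h z h0)
  · intro h z hz
    rcases lt_trichotomy z.im 0 with h1 | h1 | h1
    · exfalso
      refine h (starRingEnd ℂ z) (by simpa using h1) ?_
      rw [Polynomial.aeval_conj, hz, map_zero]
    · exact h1
    · exact absurd hz (h z h1)

lemma im_inv_neg {w : ℂ} (hw : 0 < w.im) : (1 / w).im < 0 := by
  have : w ≠ 0 := by rintro rfl; simp at hw
  rw [one_div, Complex.inv_im]
  have := Complex.normSq_pos.2 this
  apply div_neg_of_neg_of_pos <;> linarith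

lemma multiset_im_nonpos (s : Multiset ℂ) (h : ∀ x ∈ s, x.im < 0) : s.sum.im ≤ 0 := by
  induction s using Multiset.induction_on with
  | empty => simp
  | cons a s ih =>
    simp only [Multiset.sum_cons, Complex.add_im]
    have := h a (by simp)
    have := ih (fun x hx => h x (by simp [hx]))
    linarith

lemma multiset_im_neg (s : Multiset ℂ) (h : ∀ x ∈ s, x.im < 0) (h0 : s ≠ 0) : s.sum.im < 0 := by
  induction s using Multiset.induction_on with
  | empty => simp at h0
  | cons a s ih =>
    simp only [Multiset.sum_cons, Complex.add_im]
    have := h a (by simp)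
    have := multiset_im_nonpos s (fun x hx => h x (by simp [hx]))
    linarith

lemma logder_im {p : ℂ[X]} (h : ∀ z : ℂ, 0 < z.im → p.eval z ≠ 0) (z : ℂ) (hz : 0 < z.im) :
    ((derivative p).eval z / p.eval z).im ≤ 0 ∧
    (p.natDegree ≠ 0 → ((derivative p).eval z / p.eval z).im < 0) := by
  have hp0 : p ≠ 0 := by rintro rfl; exact h z hz (by simp)
  have hs := IsAlgClosed.splits p
  rw [hs.eval_derivative_div_eval_of_ne_zero (h z hz)]
  have key : ∀ x ∈ p.roots.map (fun x => 1 / (z - x)), x.im < 0 := by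
    intro x hx
    obtain ⟨r, hr, rfl⟩ := Multiset.mem_map.1 hx
    apply im_inv_neg
    have : ¬ 0 < r.im := fun h' => h r h' (by simpa using (mem_roots hp0).1 hr)
    simp only [Complex.sub_im]
    linarith
  refine ⟨multiset_im_nonpos _ key, fun hd => multiset_im_neg _ key ?_⟩
  intro h0
  rw [Multiset.map_eq_zero] at h0
  have := hs.natDegree_eq_card_roots
  rw [h0] at this
  simp at this
  exact hd this

lemma St.add_deriv {p : ℂ[X]} (h : St p) (l : ℂ) (hl : 0 ≤ l.im) :
    St (p + C l * derivative p) := by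
  rcases h with rfl | h
  · left; simp
  · right
    intro z hz h0
    have hpz := h z hz
    simp only [eval_add, eval_mul, eval_C] at h0
    set w := (derivative p).eval z / p.eval z with hw
    have e : (derivative p).eval z = w * p.eval z := by rw [hw]; field_simp
    rw [e] at h0
    have e2 : 1 + l * w = 0 := by
      have : (1 + l * w) * p.eval z = 0 := by linear_combination h0
      simpa [hpz] using this
    by_cases hd : p.natDegree = 0
    · have : derivative p = 0 := by
        rw [eq_C_of_natDegree_eq_zero hd]; simp
      rw [this] at hw
      simp [hw] at e2
    · have hwn := (logder_im h z hz).2 hd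
      rw [← hw] at hwn
      have hw0 : w ≠ 0 := by intro h; rw [h] at hwn; simp at hwn
      have : l = - (1 / w) := by field_simp; linear_combination e2
      rw [this] at hl
      have h3 : 0 < (-w).im := by simpa using hwn
      have := im_inv_neg h3
      rw [one_div, inv_neg] at this
      rw [one_div] at hl
      linarith

lemma St.deriv {p : ℂ[X]} (h : St p) : St (derivative p) := by
  rcases h with rfl | h
  · left; simp
  · by_cases hd : p.natDegree = 0
    · left
      rw [eq_C_of_natDegree_eq_zero hd]; simp
    · right
      intro z hz h0
      have := (logder_im h z hz).2 hd
      rw [h0] at this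
      simp at this

/-- The basic step, combining a pair of stable polynomials. -/
lemma St.step {f g : ℂ[X]} (hf : St f) (hg : St g)
    (hfg : f ≠ 0 → ∀ l : ℂ, 0 ≤ l.im → St (g + C l * f) ∧ g + C l * f ≠ 0) (c : ℝ) (hc : 0 ≤ c) :
    St (C (c : ℂ) * g + (X * f - derivative f)) := by
  by_cases hf0 : f = 0
  · subst hf0
    simp only [mul_zero, derivative_zero, sub_zero, add_zero]
    by_cases hc0 : c = 0
    · left; simp [hc0]
    rcases hg with rfl | hg
    · left; simp
    · right
      intro z hz
      simp [hc0, hg z hz]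
  · rcases hf with hf | hf
    · exact absurd hf hf0
    right
    intro z hz h0
    have hfz := hf z hz
    have h1 : 0 < (g.eval z / f.eval z).im := by
      by_contra hcon
      push Not at hcon
      obtain ⟨h2, h3⟩ := hfg hf0 (-(g.eval z / f.eval z)) (by simpa using hcon)
      rcases h2 with h2 | h2
      · exact h3 h2
      · apply h2 z hz
        simp only [eval_add, eval_mul, eval_C]
        field_simp
        ring
    have h2 := (logder_im hf z hz).1
    have h3 : (c : ℂ) * (g.eval z / f.eval z) + z - (derivative f).eval z / f.eval z = 0 := by
      simp only [eval_add, eval_mul, eval_C, eval_sub, eval_X] at h0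
      field_simp
      linear_combination h0
    have h4 := congrArg Complex.im h3
    simp only [Complex.sub_im, Complex.add_im, Complex.zero_im, Complex.im_ofReal_mul] at h4
    have := mul_nonneg hc h1.le
    linarith

/-- closedness -/
lemma eval_mono_multiset (s : Multiset ℂ) (hs : ∀ r ∈ s, r.im = 0) (x y y' : ℝ) (h0 : 0 ≤ y')
    (h : y' ≤ y) : ‖(s.map (fun r => (⟨x, y'⟩ : ℂ) - r)).prod‖ ≤ ‖(s.map (fun r => (⟨x, y⟩ : ℂ) - r)).prod‖ := by
  induction s using Multiset.induction_on with
  | empty => simp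
  | cons a s ih =>
    simp only [Multiset.map_cons, Multiset.prod_cons, norm_mul]
    have ih := ih (fun x hx => hs x (by simp [hx]))
    have ha := hs a (by simp)
    gcongr
    rw [Complex.norm_def, Complex.norm_def]
    apply Real.sqrt_le_sqrt
    simp only [Complex.normSq_apply, Complex.sub_re, Complex.sub_im, ha]
    nlinarith

lemma hyp_iff_mono (p : ℝ[X]) : Hyperbolic p ↔ ∀ x y y' : ℝ, 0 ≤ y' → y' ≤ y →
    ‖aeval (⟨x, y'⟩ : ℂ) p‖ ≤ ‖aeval (⟨x, y⟩ : ℂ) p‖ := by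
  constructor
  · intro h x y y' h0 h1
    have hs := IsAlgClosed.splits (p.map (algebraMap ℝ ℂ))
    rw [← eval_map_algebraMap, ← eval_map_algebraMap, hs.eval_eq_prod_roots, hs.eval_eq_prod_roots,
      norm_mul, norm_mul]
    gcongr
    exact eval_mono_multiset _ h x y y' h0 h1
  · intro h
    rw [hyp_iff_st]
    by_contra hcon
    unfold St at hcon
    push Not at hcon
    obtain ⟨hp, z, hz, h0⟩ := hcon
    apply hp
    apply Polynomial.eq_zero_of_infinite_isRoot
    have hinj : Function.Injective (fun t : ℝ => (⟨z.re, t⟩ : ℂ)) := by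
      intro a b hab
      simpa using congrArg Complex.im hab
    refine Set.Infinite.mono ?_ ((Set.Icc_infinite hz).image hinj.injOn)
    rintro _ ⟨t, ⟨ht0, ht1⟩, rfl⟩
    have := h z.re z.im t ht0 ht1
    simp only [Set.mem_ofPred_eq, IsRoot.def, eval_map_algebraMap]
    rw [eval_map_algebraMap] at h0
    change ‖_‖ ≤ ‖aeval z p‖ at this
    rw [h0, norm_zero] at this
    simpa using this

lemma hyp_closed (p : ℕ → ℝ[X]) (q : ℝ[X]) (n : ℕ) (hd : ∀ i, (p i).natDegree < n)
    (hq : q.natDegree < n) (hp : ∀ᶠ i in Filter.atTop, Hyperbolic (p i))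
    (hlim : ∀ k < n, Filter.Tendsto (fun i => (p i).coeff k) Filter.atTop (nhds (q.coeff k))) :
    Hyperbolic q := by
  rw [hyp_iff_mono]
  intro x y y' h0 h1
  have key : ∀ z : ℂ, Filter.Tendsto (fun i => ‖aeval z (p i)‖) Filter.atTop (nhds ‖aeval z q‖) := by
    intro z
    apply Filter.Tendsto.norm
    have e : ∀ r : ℝ[X], r.natDegree < n → aeval z r = ∑ k ∈ Finset.range n, (r.coeff k : ℂ) * z ^ k := by
      intro r hr
      rw [aeval_eq_sum_range' hr]
      simp [Algebra.smul_def]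
    rw [e q hq]
    simp only [fun i => e (p i) (hd i)]
    apply tendsto_finsetSum
    intro k hk
    apply Filter.Tendsto.mul_const
    exact (Complex.continuous_ofReal.tendsto _).comp (hlim k (Finset.mem_range.1 hk))
  refine le_of_tendsto_of_tendsto (key _) (key _) ?_
  filter_upwards [hp] with i hi
  exact (hyp_iff_mono _).1 hi x y y' h0 h1

lemma Hyperbolic.mul {p q : ℝ[X]} (hp : Hyperbolic p) (hq : Hyperbolic q) : Hyperbolic (p * q) := by
  rw [hyp_iff] at *
  rcases hp with rfl | hp
  · simp
  rcases hq with rfl | hq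
  · simp
  right
  intro z hz
  rw [map_mul, mul_eq_zero] at hz
  exact hz.elim (hp z) (hq z)

lemma hyp_C (a : ℝ) : Hyperbolic (C a) := by
  rw [hyp_iff]
  by_cases h : a = 0
  · simp [h]
  · right; intro z hz; simp [h] at hz

lemma hyp_lin (a : ℝ) : Hyperbolic (X + C a) := by
  rw [hyp_iff]
  right
  intro z hz
  have := congrArg Complex.im hz
  simpa using this

lemma Hyperbolic.pow {p : ℝ[X]} (hp : Hyperbolic p) (n : ℕ) : Hyperbolic (p ^ n) := by
  induction n with
  | zero => simpa using hyp_C 1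
  | succ n ih => rw [pow_succ]; exact ih.mul hp

lemma hyp_X : Hyperbolic (X : ℝ[X]) := by simpa using hyp_lin 0

lemma hyp_sq_sub (s : ℝ) (hs : 0 ≤ s) : Hyperbolic (X ^ 2 - C s) := by
  have : (X ^ 2 - C s : ℝ[X]) = (X + C (Real.sqrt s)) * (X + C (-Real.sqrt s)) := by
    have : (C s : ℝ[X]) = C (Real.sqrt s) * C (Real.sqrt s) := by
      rw [← C_mul, Real.mul_self_sqrt hs]
    rw [this, C_neg]; ring
  rw [this]
  exact (hyp_lin _).mul (hyp_lin _)

lemma Hyperbolic.deriv {p : ℝ[X]} (hp : Hyperbolic p) : Hyperbolic (derivative p) := by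
  rw [hyp_iff_st] at *
  rw [← derivative_map]
  exact hp.deriv

lemma Hyperbolic.iterate_deriv {p : ℝ[X]} (hp : Hyperbolic p) (n : ℕ) :
    Hyperbolic (derivative^[n] p) := by
  induction n with
  | zero => exact hp
  | succ n ih => rw [Function.iterate_succ_apply']; exact ih.deriv

lemma Hyperbolic.of_smul {p : ℝ[X]} {c : ℝ} (hc : c ≠ 0) (h : Hyperbolic (C c * p)) : Hyperbolic p := by
  have : p = C c⁻¹ * (C c * p) := by
    rw [← mul_assoc, ← C_mul, inv_mul_cancel₀ hc]; simp
  rw [this]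
  exact (hyp_C _).mul h

/-- quadratic: `a + 2 b x + c x^2` -/
lemma hyp_quad (a b c : ℝ) (h : Hyperbolic (C a + C (2 * b) * X + C c * X ^ 2)) : a * c ≤ b ^ 2 := by
  by_cases hc : c = 0
  · subst hc; simpa using sq_nonneg b
  rw [hyp_iff] at h
  have hdeg : (C a + C (2 * b) * X + C c * X ^ 2 : ℝ[X]).degree = 2 := by
    have := degree_quadratic (b := 2 * b) (c := a) hc
    rw [← this]; congr 1; ring
  rcases h with h | h
  · rw [h] at hdeg; simp at hdeg
  obtain ⟨z, hz⟩ := IsAlgClosed.exists_aeval_eq_zero ℂ _ (by rw [hdeg]; norm_num :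
    (C a + C (2 * b) * X + C c * X ^ 2 : ℝ[X]).degree ≠ 0)
  have him := h z hz
  have hre := congrArg Complex.re hz
  simp [pow_two, him] at hre
  have : b ^ 2 - a * c = (c * z.re + b) ^ 2 := by linear_combination (-c) * hre
  nlinarith [sq_nonneg (c * z.re + b)]

/-- splitting over the reals -/
lemma Hyperbolic.splits {p : ℝ[X]} (h : Hyperbolic p) : p.Splits := by
  by_cases hp : p = 0
  · subst hp; simp
  have hs := IsAlgClosed.splits (p.map (algebraMap ℝ ℂ))
  refine Splits.of_splits_map (algebraMap ℝ ℂ) hs ?_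
  intro z hz
  exact ⟨z.re, by apply Complex.ext <;> simp [h z hz]⟩


lemma hyp_cubic (a0 a1 a2 a3 : ℝ) (h3 : a3 ≠ 0)
    (h : Hyperbolic (C a0 + C (3 * a1) * X + C (3 * a2) * X ^ 2 + C a3 * X ^ 3)) :
    (a1 * a2 - a0 * a3) ^ 2 ≤ 4 * (a1 ^ 2 - a0 * a2) * (a2 ^ 2 - a1 * a3) := by
  let P : Cubic ℝ := ⟨a3, 3 * a2, 3 * a1, a0⟩
  have hP : P.toPoly = C a0 + C (3 * a1) * X + C (3 * a2) * X ^ 2 + C a3 * X ^ 3 := by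
    simp only [Cubic.toPoly, P]; ring
  have hs := h.splits
  rw [← hP] at hs
  have hs' : Splits (P.toPoly.map (RingHom.id ℝ)) := by rw [Polynomial.map_id]; exact hs
  obtain ⟨x, y, z, hr⟩ := (Cubic.splits_iff_roots_eq_three (φ := RingHom.id ℝ) (P := P) h3).1 hs'
  have hb := Cubic.b_eq_three_roots (φ := RingHom.id ℝ) (P := P) h3 hr
  have hc := Cubic.c_eq_three_roots (φ := RingHom.id ℝ) (P := P) h3 hr
  have hd := Cubic.d_eq_three_roots (φ := RingHom.id ℝ) (P := P) h3 hr
  simp only [RingHom.id_apply, P] at hb hc hd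
  have e2 : a2 = a3 * -(x + y + z) / 3 := by linarith
  have e1 : a1 = a3 * (x * y + x * z + y * z) / 3 := by linarith
  have : 4 * (a1 ^ 2 - a0 * a2) * (a2 ^ 2 - a1 * a3) - (a1 * a2 - a0 * a3) ^ 2
      = (a3 ^ 2 * (x - y) * (y - z) * (x - z)) ^ 2 / 27 := by
    rw [e1, e2, hd]; ring
  have h0 : 0 ≤ (a3 ^ 2 * (x - y) * (y - z) * (x - z)) ^ 2 / 27 := by positivity
  linarith

/-- forward difference -/
def dl (γ : ℕ → ℝ) : ℕ → ℝ := fun k => γ (k + 1) - γ k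

/-- Jensen polynomials -/
noncomputable def Jn : ℕ → (ℕ → ℝ) → ℝ[X]
  | 0, γ => C (γ 0)
  | n + 1, γ => Jn n γ + X * Jn n (fun k => γ (k + 1))

lemma Jn_coeff (n : ℕ) (γ : ℕ → ℝ) (j : ℕ) : (Jn n γ).coeff j = n.choose j * γ j := by
  induction n generalizing γ j with
  | zero =>
    cases j with
    | zero => simp [Jn]
    | succ j => simp [Jn]
  | succ n ih =>
    cases j with
    | zero => simp [Jn, ih]
    | succ j =>
      simp only [Jn, coeff_add, coeff_X_mul, ih, Nat.choose_succ_succ]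
      push_cast
      ring

lemma Jn_natDegree (n : ℕ) (γ : ℕ → ℝ) : (Jn n γ).natDegree < n + 1 := by
  rw [Nat.lt_succ_iff, natDegree_le_iff_coeff_eq_zero]
  intro N hN
  rw [Jn_coeff, Nat.choose_eq_zero_of_lt hN]; simp

lemma Jn_sub (n : ℕ) (γ δ : ℕ → ℝ) : Jn n (fun k => γ k - δ k) = Jn n γ - Jn n δ := by
  ext j
  simp only [Jn_coeff, coeff_sub]; ring

lemma Jn_derivative (n : ℕ) (γ : ℕ → ℝ) :
    derivative (Jn (n + 1) γ) = C ((n : ℝ) + 1) * Jn n (fun k => γ (k + 1)) := by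
  ext j
  rw [coeff_derivative, coeff_C_mul, Jn_coeff, Jn_coeff]
  have := Nat.add_one_mul_choose_eq n j
  have h2 : ((n : ℝ) + 1) * (n.choose j) = ((n + 1).choose (j + 1)) * ((j : ℝ) + 1) := by
    exact_mod_cast this
  linear_combination (-γ (j + 1)) * h2

lemma dl_iter_shift (γ : ℕ → ℝ) (j m : ℕ) :
    dl^[j] (fun k => γ (m + k)) = fun k => dl^[j] γ (m + k) := by
  induction j generalizing γ with
  | zero => rfl
  | succ j ih =>
    rw [Function.iterate_succ_apply, Function.iterate_succ_apply, ← ih (dl γ)]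
    congr 1

lemma Jn_dl_eval (n : ℕ) (γ : ℕ → ℝ) (z : ℂ) (hz : z ≠ 1) :
    aeval z (Jn n (fun j => dl^[j] γ 0)) = (1 - z) ^ n * aeval (z / (1 - z)) (Jn n γ) := by
  have h1 : 1 - z ≠ 0 := sub_ne_zero.2 hz.symm
  induction n generalizing γ with
  | zero => simp [Jn]
  | succ n ih =>
    have e : (fun k => dl^[k + 1] γ 0) = (fun k => dl^[k] (dl γ) 0) := by
      funext k; rw [Function.iterate_succ_apply]
    simp only [Jn, map_add, map_mul, aeval_X]
    rw [e, ih, ih]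
    have : Jn n (dl γ) = Jn n (fun k => γ (k + 1)) - Jn n γ := by
      rw [← Jn_sub]; rfl
    rw [this, map_sub]
    field_simp
    ring

lemma Jn_dl_hyp (n : ℕ) (γ : ℕ → ℝ) (h : Hyperbolic (Jn n γ)) :
    Hyperbolic (Jn n (fun j => dl^[j] γ 0)) := by
  rw [hyp_iff] at h
  by_cases h0 : Jn n (fun j => dl^[j] γ 0) = 0
  · rw [h0]; simp [Hyperbolic]
  rw [hyp_iff]
  right
  intro z hz
  by_cases hz1 : z = 1
  · simp [hz1]
  have h1 : 1 - z ≠ 0 := sub_ne_zero.2 (Ne.symm hz1)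
  rcases h with h | h
  · exfalso
    apply h0
    have hc : ∀ k ≤ n, γ k = 0 := by
      intro k hk
      have := Jn_coeff n γ k
      rw [h, coeff_zero] at this
      have h3 : (n.choose k : ℝ) ≠ 0 := by exact_mod_cast (Nat.choose_pos hk).ne'
      simpa [h3] using this.symm
    apply Polynomial.map_injective (algebraMap ℝ ℂ) (algebraMap ℝ ℂ).injective
    rw [Polynomial.map_zero]
    apply Polynomial.eq_zero_of_infinite_isRoot
    refine Set.Infinite.mono (s := {(1 : ℂ)}ᶜ) ?_ (Set.finite_singleton _).infinite_compl
    intro w hw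
    simp only [Set.mem_ofPred_eq, IsRoot.def, eval_map_algebraMap]
    rw [Jn_dl_eval n γ w (by simpa using hw), h]
    simp
  · rw [Jn_dl_eval n γ z hz1] at hz
    have h2 : aeval (z / (1 - z)) (Jn n γ) = 0 := by
      simpa [h1] using hz
    have h3 := h _ h2
    set w := z / (1 - z) with hw
    have h4 : w * (1 - z) = z := by rw [hw]; field_simp
    have h6 := congrArg Complex.im h4
    have h7 := congrArg Complex.re h4
    simp only [Complex.mul_im, Complex.mul_re, Complex.sub_re, Complex.sub_im, Complex.one_re, Complex.one_im, h3] at h6 h7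
    have h8 : z.im * (1 + w.re) = 0 := by linarith
    rcases mul_eq_zero.1 h8 with h9 | h9
    · exact h9
    · exfalso
      have h10 : w.re = -1 := by linarith
      rw [h10] at h7
      linarith

/-- the working class of sequences -/
def Qs (δ : ℕ → ℝ) : Prop := ∀ m n, Hyperbolic (Jn n (fun j => dl^[j] δ m))

lemma Qs.dl {δ : ℕ → ℝ} (h : Qs δ) : Qs (dl δ) := by
  intro m n
  have := (h m (n + 1)).deriv
  rw [Jn_derivative] at this
  exact this.of_smul (by positivity)

lemma Qs_of_jensen (γ : ℕ → ℝ) (h : ∀ m n, Hyperbolic (Jn n (fun k => γ (m + k)))) : Qs γ := by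
  intro m n
  have := Jn_dl_hyp n _ (h m n)
  simpa only [dl_iter_shift, add_zero] using this

lemma Qs.logconcave {δ : ℕ → ℝ} (h : Qs δ) (m : ℕ) : δ m * δ (m + 2) ≤ δ (m + 1) ^ 2 := by
  have h1 := h m 2
  have : Jn 2 (fun j => _root_.dl^[j] δ m) =
      C (δ m) + C (2 * (δ (m + 1) - δ m)) * X + C (δ (m + 2) - 2 * δ (m + 1) + δ m) * X ^ 2 := by
    simp only [Jn, Function.iterate_succ_apply, Function.iterate_zero_apply, _root_.dl,
      map_add, map_sub, map_mul]
    simp only [map_ofNat, add_assoc]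
    norm_num
    ring
  rw [this] at h1
  have := hyp_quad _ _ _ h1
  nlinarith

lemma Qs.cubic {δ : ℕ → ℝ} (h : Qs δ) (m : ℕ) (M u v w : ℝ) (hM : M = δ m)
    (hu : u = _root_.dl δ m) (hv : v = _root_.dl δ (m + 1)) (hw : w = _root_.dl δ (m + 2))
    (h3 : w - 2 * v + u ≠ 0) :
    (u * (v - u) - M * (w - 2 * v + u)) ^ 2 ≤
      4 * (u ^ 2 - M * (v - u)) * ((v - u) ^ 2 - u * (w - 2 * v + u)) := by
  have h1 := h m 3
  apply hyp_cubic _ _ _ _ h3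
  convert h1 using 1
  simp only [Jn, Function.iterate_succ_apply, Function.iterate_zero_apply, hu, hv, hw, hM, _root_.dl,
    map_add, map_sub, map_mul]
  simp only [map_ofNat, add_assoc]
  norm_num
  ring


lemma core_arith (u M a A R S : ℝ) (hupos : 0 < u) (hMpos : 0 < M) (hapos : 0 < a) (ha1 : a ≤ 1)
    (hi1 : a < A) (hR0 : 0 ≤ R) (hS0 : 0 ≤ S) (hR1 : R ≤ 1) (hA : A = 1 - 2 * R + R * S)
    (hub : u ≤ a ^ 2 / 9 * M)
    (hc3 : (u * (1 - R) + M * A) ^ 2 ≤ 4 * (u ^ 2 + M * u * (1 - R)) * ((1 - R) ^ 2 - A)) :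
    False := by
  have hq1 : 0 ≤ 1 - R := by linarith
  have b1 : (M * a) ^ 2 ≤ (u * (1 - R) + M * A) ^ 2 := by
    apply pow_le_pow_left₀ (by positivity)
    have : M * a ≤ M * A := by gcongr
    have : 0 ≤ u * (1 - R) := by positivity
    linarith
  have b2 : 4 * (u ^ 2 + M * u * (1 - R)) * ((1 - R) ^ 2 - A) ≤ 4 * (u ^ 2 + M * u) * 1 := by
    have c1 : (1 - R) ^ 2 - A ≤ 1 := by
      have := mul_nonneg hR0 hS0
      nlinarith
    have c2 : M * u * (1 - R) ≤ M * u := by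
      have : 0 ≤ M * u := by positivity
      nlinarith
    have c3 : 0 ≤ u ^ 2 + M * u * (1 - R) := by positivity
    calc 4 * (u ^ 2 + M * u * (1 - R)) * ((1 - R) ^ 2 - A)
        ≤ 4 * (u ^ 2 + M * u * (1 - R)) * 1 := by gcongr
      _ ≤ _ := by linarith
  have hub2 : u ≤ M := by
    have : a ^ 2 / 9 ≤ 1 := by nlinarith
    nlinarith
  have b3 : u ^ 2 ≤ M * u := by nlinarith
  have b4 : M * u ≤ M * (a ^ 2 / 9 * M) := by gcongr
  have : 0 < M ^ 2 * a ^ 2 := by positivity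
  nlinarith

set_option maxHeartbeats 1000000 in
lemma core_step {γ : ℕ → ℝ} (h : Qs γ) (h0 : ∀ k, 0 ≤ γ k) (h1 : ∀ k, 0 ≤ dl γ k) :
    ∀ k, 0 ≤ dl (dl γ) k := by
  by_contra hcon
  push Not at hcon
  obtain ⟨k, hk⟩ := hcon
  set δ := dl γ with hδ
  have hlc : ∀ m, δ m * δ (m + 2) ≤ δ (m + 1) ^ 2 := h.dl.logconcave
  have hk' : δ (k + 1) < δ k := by
    have : dl δ k = δ (k + 1) - δ k := rfl
    linarith
  have hkpos : 0 < δ k := lt_of_le_of_lt (h1 _) hk'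
  obtain ⟨ρ, hρ⟩ : ∃ ρ, ρ = δ (k + 1) / δ k := ⟨_, rfl⟩
  have hρ1 : ρ < 1 := by rw [hρ, div_lt_one hkpos]; exact hk'
  have hρ0 : 0 ≤ ρ := by rw [hρ]; exact div_nonneg (h1 _) hkpos.le
  have claim : ∀ i, 0 < δ (k + i) ∧ δ (k + i + 1) ≤ ρ * δ (k + i) := by
    intro i
    induction i with
    | zero =>
      refine ⟨hkpos, ?_⟩
      rw [hρ]; simp only [add_zero]; rw [div_mul_cancel₀ _ hkpos.ne']
    | succ i ih =>
      obtain ⟨ih1, ih2⟩ := ih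
      have hl := hlc (k + i)
      have p1 : 0 < δ (k + i + 1) := by
        rcases (h1 (k + i + 1)).lt_or_eq with hp | hp
        · exact hp
        exfalso
        rw [← hp] at hl
        have hz : δ (k + i + 2) = 0 := by
          have := h1 (k + i + 2)
          nlinarith
        have hc := h.cubic (k + i) (γ (k + i)) (δ (k + i)) 0 0 rfl rfl hp hz.symm
          (by simpa using ih1.ne')
        have hg := h0 (k + i)
        have : 0 < δ (k + i) * (δ (k + i) + γ (k + i)) := by positivity
        nlinarith
      refine ⟨p1, ?_⟩
      change δ (k + i + 2) ≤ ρ * δ (k + i + 1)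
      have : δ (k + i) * δ (k + i + 2) ≤ δ (k + i) * (ρ * δ (k + i + 1)) := by nlinarith
      exact le_of_mul_le_mul_left this ih1
  have hgeo : ∀ i, δ (k + i) ≤ ρ ^ i * δ k := by
    intro i
    induction i with
    | zero => simp
    | succ i ih =>
      have := (claim i).2
      calc δ (k + (i + 1)) ≤ ρ * δ (k + i) := this
        _ ≤ ρ * (ρ ^ i * δ k) := by gcongr
        _ = _ := by ring
  let r : ℕ → ℝ := fun i => δ (k + i + 1) / δ (k + i)
  have hr0 : ∀ i, 0 ≤ r i := fun i => div_nonneg (h1 _) (h1 _)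
  have hr1 : ∀ i, r i ≤ ρ := fun i => by
    rw [div_le_iff₀ (claim i).1]; exact (claim i).2
  have hanti : Antitone r := by
    apply antitone_nat_of_succ_le
    intro i
    have a1 := (claim i).1
    have a2 := (claim (i + 1)).1
    change δ (k + i + 2) / δ (k + (i + 1)) ≤ δ (k + i + 1) / δ (k + i)
    rw [div_le_div_iff₀ a2 a1]
    have := hlc (k + i)
    change δ (k + i + 2) * δ (k + i) ≤ δ (k + i + 1) * δ (k + i + 1)
    nlinarith
  have hlim := tendsto_atTop_ciInf hanti ⟨0, by rintro _ ⟨i, rfl⟩; exact hr0 i⟩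
  set L := ⨅ i, r i with hL
  have hLρ : L ≤ ρ := le_of_tendsto' hlim hr1
  have hlim2 := hlim.comp (Filter.tendsto_add_atTop_nat 1)
  have hA : Filter.Tendsto (fun i => 1 - 2 * r i + r i * r (i + 1)) Filter.atTop
      (nhds (1 - 2 * L + L * L)) :=
    (tendsto_const_nhds.sub (hlim.const_mul 2)).add (hlim.mul hlim2)
  obtain ⟨a, ha⟩ : ∃ a, a = (1 - ρ) ^ 2 / 2 := ⟨_, rfl⟩
  have hapos : 0 < a := by
    have : 0 < 1 - ρ := by linarith
    rw [ha]; positivity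
  have ha1 : a ≤ 1 := by rw [ha]; nlinarith
  have hAev : ∀ᶠ i in Filter.atTop, a < 1 - 2 * r i + r i * r (i + 1) := by
    apply hA.eventually_const_lt
    nlinarith
  have hM0 : 0 < γ (k + 1) := by
    have : δ k = γ (k + 1) - γ k := rfl
    have := h0 k
    linarith
  have hu : Filter.Tendsto (fun i => δ (k + i)) Filter.atTop (nhds 0) := by
    refine squeeze_zero (fun i => h1 _) hgeo ?_
    simpa using (tendsto_pow_atTop_nhds_zero_of_lt_one hρ0 hρ1).mul_const (δ k)
  have huev : ∀ᶠ i in Filter.atTop, δ (k + i) < a ^ 2 / 9 * γ (k + 1) :=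
    hu.eventually_lt_const (by positivity)
  obtain ⟨i, hi1, hi2, hi3⟩ := (hAev.and (huev.and (Filter.eventually_ge_atTop 1))).exists
  have hmono : Monotone γ := monotone_nat_of_le_succ (fun j => by
    have : δ j = γ (j + 1) - γ j := rfl
    have := h1 j
    linarith)
  have hM : γ (k + 1) ≤ γ (k + i) := hmono (by omega)
  have hupos := (claim i).1
  set u := δ (k + i) with hu_def
  set M := γ (k + i) with hM_def
  have hv : r i * u = δ (k + i + 1) := div_mul_cancel₀ _ hupos.ne'
  have hw : r (i + 1) * (r i * u) = δ (k + i + 2) := by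
    rw [hv]; exact div_mul_cancel₀ _ (claim (i + 1)).1.ne'
  have hrr : r (i + 1) ≤ r i := hanti (by omega)
  generalize hR : r i = R at *
  generalize hS : r (i + 1) = S at *
  have hS0 : 0 ≤ S := by rw [← hS]; exact hr0 _
  have hR0 : 0 ≤ R := by rw [← hR]; exact hr0 _
  have hRρ : R ≤ ρ := by rw [← hR]; exact hr1 _
  set A := 1 - 2 * R + R * S with hA_def
  have hAu : S * (R * u) - 2 * (R * u) + u = A * u := by rw [hA_def]; ring
  have hc := h.cubic (k + i) M u (R * u) (S * (R * u)) hM_def hu_def hv hw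
    (by rw [hAu]; exact (mul_pos (by linarith) hupos).ne')
  rw [hAu] at hc
  have hc2 : u ^ 2 * (u * (1 - R) + M * A) ^ 2 ≤
      u ^ 2 * (4 * (u ^ 2 + M * u * (1 - R)) * ((1 - R) ^ 2 - A)) := by
    have e1 : u ^ 2 * (u * (1 - R) + M * A) ^ 2 = (u * (R * u - u) - M * (A * u)) ^ 2 := by ring
    have e2 : u ^ 2 * (4 * (u ^ 2 + M * u * (1 - R)) * ((1 - R) ^ 2 - A)) =
      4 * (u ^ 2 - M * (R * u - u)) * ((R * u - u) ^ 2 - u * (A * u)) := by ring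
    rw [e1, e2]; exact hc
  have hc3 := le_of_mul_le_mul_left hc2 (by positivity)
  have hub : u ≤ a ^ 2 / 9 * M := by
    have : a ^ 2 / 9 * γ (k + 1) ≤ a ^ 2 / 9 * M := by gcongr
    linarith
  exact core_arith u M a A R S hupos (by linarith) hapos ha1 hi1 hR0 hS0 (by linarith) hA_def hub hc3

lemma core_all {γ : ℕ → ℝ} (h : Qs γ) (h0 : ∀ k, 0 ≤ γ k) (h1 : ∀ k, 0 ≤ dl γ k) (j : ℕ) :
    Qs (dl^[j] γ) ∧ (∀ k, 0 ≤ dl^[j] γ k) ∧ ∀ k, 0 ≤ dl (dl^[j] γ) k := by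
  induction j with
  | zero => exact ⟨h, h0, h1⟩
  | succ j ih =>
    rw [Function.iterate_succ_apply']
    exact ⟨ih.1.dl, ih.2.2, core_step ih.1 ih.2.1 ih.2.2⟩


noncomputable def HeC (n : ℕ) : ℂ[X] := (Polynomial.hermite n).map (Int.castRingHom ℂ)

noncomputable def Hs (n : ℕ) (a : ℕ → ℂ) : ℂ[X] := ∑ k ∈ Finset.range n, C (a k) * HeC k

lemma hermite_derivative (n : ℕ) :
    derivative (Polynomial.hermite (n + 1)) = ((n : ℤ[X]) + 1) * Polynomial.hermite n := by
  induction n with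
  | zero => simp
  | succ n ih =>
    have e : Polynomial.hermite (n + 1) = X * Polynomial.hermite n - derivative (Polynomial.hermite n) :=
      hermite_succ n
    rw [hermite_succ (n + 1), derivative_sub, derivative_mul, derivative_X, ih, derivative_mul]
    have : derivative ((n : ℤ[X]) + 1) = 0 := by simp
    rw [this]
    push_cast
    linear_combination (-((n : ℤ[X]) + 1)) * e

lemma HeC_derivative (n : ℕ) : derivative (HeC (n + 1)) = C ((n : ℂ) + 1) * HeC n := by
  unfold HeC
  rw [derivative_map, hermite_derivative]
  simp

lemma HeC_succ (n : ℕ) : HeC (n + 1) = X * HeC n - derivative (HeC n) := by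
  unfold HeC
  rw [derivative_map, hermite_succ]
  simp

lemma HeC_coeff_self (n : ℕ) : (HeC n).coeff n = 1 := by
  simp [HeC]

lemma HeC_coeff_lt {n k : ℕ} (h : n < k) : (HeC n).coeff k = 0 := by
  simp [HeC, coeff_map, coeff_hermite_of_lt h]

lemma Hs_congr {n : ℕ} {a b : ℕ → ℂ} (h : ∀ k < n, a k = b k) : Hs n a = Hs n b := by
  apply Finset.sum_congr rfl
  intro k hk
  rw [h k (Finset.mem_range.1 hk)]

lemma Hs_add_smul (n : ℕ) (a b : ℕ → ℂ) (l : ℂ) :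
    Hs n a + C l * Hs n b = Hs n (fun k => a k + l * b k) := by
  simp only [Hs, Finset.mul_sum, ← Finset.sum_add_distrib]
  apply Finset.sum_congr rfl
  intro k _
  simp only [map_add, map_mul]; ring

lemma Hs_succ (n : ℕ) (a : ℕ → ℂ) : Hs (n + 1) a = Hs n a + C (a n) * HeC n :=
  Finset.sum_range_succ _ _

lemma Hs_eq_zero (n : ℕ) (a : ℕ → ℂ) (h : Hs n a = 0) : ∀ k < n, a k = 0 := by
  induction n with
  | zero => intro k hk; omega
  | succ n ih =>
    have h1 := congrArg (fun p => coeff p n) h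
    simp only [Hs_succ, coeff_add, coeff_C_mul, HeC_coeff_self, coeff_zero] at h1
    have h2 : (Hs n a).coeff n = 0 := by
      rw [Hs, finsetSum_coeff]
      apply Finset.sum_eq_zero
      intro k hk
      rw [coeff_C_mul, HeC_coeff_lt (Finset.mem_range.1 hk), mul_zero]
    rw [h2] at h1
    have h3 : a n = 0 := by simpa using h1
    rw [Hs_succ, h3] at h
    simp only [map_zero, zero_mul, add_zero] at h
    intro k hk
    rcases Nat.lt_succ_iff_lt_or_eq.1 hk with hk | rfl
    · exact ih h k hk
    · exact h3

lemma Hs_derivative (n : ℕ) (a : ℕ → ℂ) :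
    derivative (Hs (n + 1) a) = Hs n (fun k => ((k : ℂ) + 1) * a (k + 1)) := by
  rw [Hs, Finset.sum_range_succ', derivative_add, derivative_sum]
  have : derivative (C (a 0) * HeC 0) = 0 := by simp [HeC]
  rw [this, add_zero, Hs]
  apply Finset.sum_congr rfl
  intro k _
  rw [derivative_C_mul, HeC_derivative]
  simp only [map_mul]; ring

lemma Hs_raise (n : ℕ) (b : ℕ → ℂ) :
    X * Hs n b - derivative (Hs n b) = Hs (n + 1) (fun k => if k = 0 then 0 else b (k - 1)) := by
  conv_rhs => rw [Hs, Finset.sum_range_succ']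
  simp only [Hs, derivative_sum, Finset.mul_sum, ← Finset.sum_sub_distrib]
  simp only [if_true, map_zero, zero_mul, add_zero, Nat.add_eq_zero_iff, one_ne_zero, and_false, if_false,
    Nat.add_sub_cancel]
  apply Finset.sum_congr rfl
  intro k _
  rw [derivative_C_mul, HeC_succ]; ring

def Good (γ : ℕ → ℝ) : Prop := (∀ k, 0 ≤ γ k) ∧ (∀ k, 0 < γ k → 0 < γ (k + 1)) ∧
  ∀ n a, St (Hs n a) → St (Hs n (fun k => (γ k : ℂ) * a k))

lemma good_one : Good (fun _ => 1) := by
  refine ⟨by simp, by simp, ?_⟩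
  intro n a h
  simpa using h

lemma Good.step {γ : ℕ → ℝ} (h : Good γ) (c : ℝ) (hc : 0 ≤ c) :
    Good (fun k => c * γ k + k * γ (k - 1)) := by
  obtain ⟨h0, h1, h2⟩ := h
  refine ⟨?_, ?_, ?_⟩
  · intro k
    have := h0 k
    have := h0 (k - 1)
    positivity
  · intro k hk
    simp only [Nat.add_sub_cancel]
    have a0 := h0 k
    have a1 := h0 (k + 1)
    have a2 : (0 : ℝ) ≤ ((k + 1 : ℕ) : ℝ) * γ k := by positivity
    rcases a0.lt_or_eq with hp | hp
    · have : (0 : ℝ) < ((k + 1 : ℕ) : ℝ) * γ k := by positivity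
      have : 0 ≤ c * γ (k + 1) := by positivity
      linarith
    · exfalso
      beta_reduce at hk
      rw [← hp] at hk
      cases k with
      | zero => simp at hk
      | succ k =>
        simp only [Nat.add_sub_cancel] at hk
        rcases (h0 k).lt_or_eq with hq | hq
        · have := h1 k hq
          linarith
        · rw [← hq] at hk; simp at hk
  · intro n a ha
    cases n with
    | zero => left; simp [Hs]
    | succ n =>
      let b : ℕ → ℂ := fun k => if k < n + 1 then a k else 0
      have hb : ∀ k < n + 1, a k = b k := fun k hk => by simp only [b, if_pos hk]
      have hb0 : ∀ k, n + 1 ≤ k → b k = 0 := fun k hk => by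
        simp only [b]; rw [if_neg (by omega)]
      rw [Hs_congr hb] at ha
      rw [Hs_congr (b := fun k => ((c * γ k + k * γ (k - 1) : ℝ) : ℂ) * b k)
        (fun k hk => by rw [hb k hk])]
      let d : ℕ → ℂ := fun k => ((k : ℂ) + 1) * b (k + 1)
      have hdn : d n = 0 := by simp only [d]; rw [hb0 _ le_rfl, mul_zero]
      have hd : derivative (Hs (n + 1) b) = Hs (n + 1) d := by
        rw [Hs_derivative, Hs_succ, hdn]; simp [d]
      have hf : St (Hs (n + 1) (fun k => (γ k : ℂ) * d k)) := h2 _ _ (hd ▸ ha.deriv)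
      have hg : St (Hs (n + 1) (fun k => (γ k : ℂ) * b k)) := h2 _ _ ha
      have key := hf.step hg ?_ c hc
      · convert key using 1
        have e : Hs (n + 1) (fun k => (γ k : ℂ) * d k) = Hs n (fun k => (γ k : ℂ) * d k) := by
          rw [Hs_succ, hdn]; simp
        rw [e, Hs_raise, add_comm (C (c : ℂ) * _) _, Hs_add_smul]
        apply Hs_congr
        intro k hk
        cases k with
        | zero => simp [mul_assoc]
        | succ k =>
          simp only [Nat.add_eq_zero_iff, one_ne_zero, and_false, if_false, Nat.add_sub_cancel, d]
          push_cast
          ring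
      · intro hf0 l hl
        have e : Hs (n + 1) (fun k => (γ k : ℂ) * b k) + C l * Hs (n + 1) (fun k => (γ k : ℂ) * d k)
            = Hs (n + 1) (fun k => (γ k : ℂ) * (b k + l * d k)) := by
          rw [Hs_add_smul]; apply Hs_congr; intro k _; ring
        rw [e]
        constructor
        · apply h2
          rw [← Hs_add_smul, ← hd]
          exact ha.add_deriv l hl
        · intro hz
          have hz' := Hs_eq_zero _ _ hz
          apply hf0
          apply Finset.sum_eq_zero
          intro k hk
          have hk' := Finset.mem_range.1 hk
          by_cases hγ : γ k = 0
          · simp [hγ]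
          have hpos : ∀ i, 0 < γ (k + i) := by
            intro i
            induction i with
            | zero => exact lt_of_le_of_ne (h0 k) (Ne.symm hγ)
            | succ i ih => exact h1 _ ih
          have hbz : ∀ i j, k ≤ j → n + 1 ≤ j + i → b j = 0 := by
            intro i
            induction i with
            | zero => intro j _ hj; exact hb0 j hj
            | succ i ih =>
              intro j hkj hj
              by_cases hjn : n + 1 ≤ j
              · exact hb0 j hjn
              have q1 := hz' j (by omega)
              have q2 := hpos (j - k)
              rw [Nat.add_sub_cancel' hkj] at q2
              have q3 : b (j + 1) = 0 := ih (j + 1) (by omega) (by omega)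
              have q4 : (γ j : ℂ) ≠ 0 := by exact_mod_cast q2.ne'
              simp only [d, q3, mul_zero, add_zero, mul_eq_zero] at q1
              exact q1.resolve_left q4
          have : d k = 0 := by
            simp only [d]; rw [hbz (n + 1) (k + 1) (by omega) (by omega), mul_zero]
          simp [this]

lemma Good.isMS {γ : ℕ → ℝ} (h : Good γ) : IsMultiplierSeqFor hermiteR γ := by
  intro n a ha
  have e : ∀ b : ℕ → ℝ, (∑ k ∈ Finset.range n, C (b k) * hermiteR k).map (algebraMap ℝ ℂ)
      = Hs n (fun k => (b k : ℂ)) := by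
    intro b
    rw [Polynomial.map_sum, Hs]
    apply Finset.sum_congr rfl
    intro k _
    rw [Polynomial.map_mul, map_C, hermiteR, HeC, Polynomial.map_map]
    congr 2
  rw [hyp_iff_st, e] at *
  have := h.2.2 n _ ha
  simpa using this

/-- the sequence attached to a polynomial -/
noncomputable def sqn (q : ℝ[X]) (k : ℕ) : ℝ := ∑ j ∈ Finset.range (k + 1), q.coeff j * (k.descFactorial j : ℝ)

lemma sqn_mul (q : ℝ[X]) (c : ℝ) (k : ℕ) : sqn ((X + C c) * q) k = c * sqn q k + k * sqn q (k - 1) := by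
  have h1 : sqn ((X + C c) * q) k = c * sqn q k + sqn (X * q) k := by
    simp only [sqn, Finset.mul_sum, ← Finset.sum_add_distrib]
    apply Finset.sum_congr rfl
    intro j _
    rw [add_mul, coeff_add, coeff_C_mul]; ring
  rw [h1]
  congr 1
  cases k with
  | zero => simp [sqn]
  | succ k =>
    rw [sqn, Finset.sum_range_succ']
    simp only [coeff_X_mul, coeff_X_mul_zero, zero_mul, add_zero, Nat.add_sub_cancel, sqn, Finset.mul_sum,
      Nat.succ_descFactorial_succ]
    apply Finset.sum_congr rfl
    intro j _
    push_cast; ring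

lemma good_prod (s : Multiset ℝ) (hs : ∀ r ∈ s, r ≤ 0) :
    Good (sqn (s.map (fun r => X - C r)).prod) := by
  induction s using Multiset.induction_on with
  | empty =>
    convert good_one using 1
    funext k
    simp only [Multiset.map_zero, Multiset.prod_zero, sqn, coeff_one]
    rw [Finset.sum_eq_single 0]
    · simp
    · intro b _ hb; simp [hb]
    · simp
  | cons r s ih =>
    have := (ih (fun x hx => hs x (by simp [hx]))).step (-r) (by have := hs r (by simp); linarith)
    convert this using 1
    funext k
    rw [Multiset.map_cons, Multiset.prod_cons, ← sqn_mul]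
    simp [sub_eq_add_neg]

lemma sqn_C_mul (q : ℝ[X]) (c : ℝ) (k : ℕ) : sqn (C c * q) k = c * sqn q k := by
  simp only [sqn, Finset.mul_sum, coeff_C_mul, mul_assoc]

lemma isMS_smul {q : ℕ → ℝ[X]} {γ : ℕ → ℝ} (h : IsMultiplierSeqFor q γ) (c : ℝ) :
    IsMultiplierSeqFor q (fun k => c * γ k) := by
  intro n a ha
  have := (hyp_C c).mul (h n a ha)
  rw [Finset.mul_sum] at this
  convert this using 2
  simp only [map_mul]; ring

lemma isMS_sqn (q : ℝ[X]) (hq : Hyperbolic q) (h0 : ∀ j, 0 ≤ q.coeff j) :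
    IsMultiplierSeqFor hermiteR (sqn q) := by
  by_cases hq0 : q = 0
  · intro n a _
    simp [hq0, sqn, Hyperbolic]
  have hs := hq.splits.eq_prod_roots
  have hr : ∀ r ∈ q.roots, r ≤ 0 := by
    intro r hr
    by_contra hpos
    push Not at hpos
    have h1 : q.eval r = 0 := (mem_roots hq0).1 hr
    rw [eval_eq_sum_range] at h1
    have h2 : 0 < ∑ i ∈ Finset.range (q.natDegree + 1), q.coeff i * r ^ i := by
      apply Finset.sum_pos' (fun i _ => mul_nonneg (h0 i) (by positivity))
      refine ⟨q.natDegree, by simp, mul_pos ?_ (by positivity)⟩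
      exact lt_of_le_of_ne (h0 _) (Ne.symm (by simpa using hq0))
    linarith
  have := isMS_smul (good_prod q.roots hr).isMS q.leadingCoeff
  convert this using 1
  funext k
  rw [← sqn_C_mul, ← hs]

lemma isMS_closed (g : ℕ → ℕ → ℝ) (γ : ℕ → ℝ) (h : ∀ᶠ i in Filter.atTop, IsMultiplierSeqFor hermiteR (g i))
    (hlim : ∀ k, Filter.Tendsto (fun i => g i k) Filter.atTop (nhds (γ k))) :
    IsMultiplierSeqFor hermiteR γ := by
  intro n a ha
  have hdeg : ∀ b : ℕ → ℝ, (∑ k ∈ Finset.range n, C (b k) * hermiteR k).natDegree < n + 1 := by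
    intro b
    rw [Nat.lt_succ_iff]
    apply natDegree_sum_le_of_forall_le
    intro k hk
    refine (natDegree_C_mul_le _ _).trans ((natDegree_map_le).trans ?_)
    rw [natDegree_hermite]
    exact (Finset.mem_range.1 hk).le
  refine hyp_closed (fun i => ∑ k ∈ Finset.range n, C (g i k * a k) * hermiteR k) _ (n + 1)
    (fun i => hdeg _) (hdeg _) ?_ ?_
  · filter_upwards [h] with i hi
    exact hi n a ha
  · intro j _
    simp only [finsetSum_coeff, coeff_C_mul]
    apply tendsto_finsetSum
    intro k _
    exact ((hlim k).mul_const _).mul_const _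

lemma dl_newton (γ : ℕ → ℝ) (k : ℕ) :
    γ k = ∑ j ∈ Finset.range (k + 1), (k.choose j : ℝ) * dl^[j] γ 0 := by
  have := shift_eq_sum_fwdDiff_iter 1 γ k 0
  simp only [nsmul_eq_mul, zero_add, mul_one, Nat.cast_id] at this
  exact this

lemma hermite_of_nonneg (γ : ℕ → ℝ) (h : Qs γ) (h0 : ∀ k, 0 ≤ γ k) (h1 : ∀ k, 0 ≤ dl γ k) :
    IsMultiplierSeqFor hermiteR γ := by
  let q : ℕ → ℝ[X] := fun n => (Jn n (fun j => dl^[j] γ 0)).comp (C ((n : ℝ)⁻¹) * X)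
  have hco : ∀ n j, (q n).coeff j = n.choose j * dl^[j] γ 0 * ((n : ℝ)⁻¹) ^ j := by
    intro n j
    simp only [q, comp_C_mul_X_coeff, Jn_coeff]
  refine isMS_closed (fun n => sqn (q n)) γ ?_ ?_
  · filter_upwards [Filter.eventually_ge_atTop 1] with n hn
    apply isMS_sqn
    · have hJ := h 0 n
      rw [hyp_iff] at *
      rcases hJ with hJ | hJ
      · left; simp only [q, hJ, zero_comp]
      · right
        intro z hz
        simp only [q, aeval_comp] at hz
        have := hJ _ hz
        have hn' : (n : ℝ) ≠ 0 := by positivity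
        have e : aeval z (C ((n : ℝ)⁻¹) * X) = (((n : ℝ)⁻¹ : ℝ) : ℂ) * z := by simp
        rw [e, Complex.im_ofReal_mul] at this
        simpa [hn', Nat.one_le_iff_ne_zero.1 hn] using this
    · intro j
      rw [hco]
      have := (core_all h h0 h1 j).2.1 0
      positivity
  · intro k
    rw [dl_newton γ k]
    simp only [sqn, hco]
    apply tendsto_finsetSum
    intro j _
    have e := (isEquivalent_choose j)
    have hlim : Filter.Tendsto (fun n : ℕ => (n.choose j : ℝ) * ((n : ℝ)⁻¹) ^ j * j.factorial) Filter.atTop (nhds 1) := by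
      have := (Asymptotics.isEquivalent_iff_tendsto_one ?_).1 e
      · refine this.congr' ?_
        filter_upwards [Filter.eventually_ge_atTop 1] with n hn
        have hn' : (n : ℝ) ≠ 0 := by positivity
        have := Nat.cast_ne_zero (R := ℝ).2 (Nat.factorial_ne_zero j)
        simp only [Pi.div_apply]
        rw [inv_pow]
        field_simp
      · filter_upwards [Filter.eventually_ge_atTop 1] with n hn
        positivity
    have h2 := hlim.mul_const ((k.choose j : ℝ) * dl^[j] γ 0)
    rw [one_mul] at h2
    refine h2.congr ?_
    intro n
    rw [Nat.descFactorial_eq_factorial_mul_choose]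
    push_cast
    ring


structure Leg (q : ℕ → ℝ[X]) : Prop where
  deg : ∀ n j, n < j → (q n).coeff j = 0
  lead : ∀ n, (q n).coeff n = 1
  par : ∀ n j, Odd (n + j) → (q n).coeff j = 0
  sec : ∀ n, (q (n + 2)).coeff n < 0
  thr : ∀ n, 0 < (q (n + 4)).coeff n

noncomputable def legc (n : ℕ) : ℝ := 1 / (2 ^ n * n.factorial : ℝ) * ((2 * n).descFactorial n : ℝ)

lemma legc_pos (n : ℕ) : 0 < legc n := by
  have : 0 < (2 * n).descFactorial n := Nat.descFactorial_pos.2 (by omega)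
  unfold legc
  positivity

lemma legendre_coeff_aux (n j : ℕ) : ((X ^ 2 - 1 : ℝ[X]) ^ n).coeff j =
    if 2 ∣ j then (-1) ^ (n - j / 2) * (n.choose (j / 2) : ℝ) else 0 := by
  have : (X ^ 2 - 1 : ℝ[X]) ^ n = expand ℝ 2 ((X + C (-1)) ^ n) := by
    simp [sub_eq_add_neg]
  rw [this, coeff_expand (by norm_num)]
  simp only [coeff_X_add_C_pow]

lemma legendre_coeff (n j : ℕ) : (legendre n).coeff j =
    1 / (2 ^ n * n.factorial : ℝ) * (((j + n).descFactorial n : ℝ) *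
     (if 2 ∣ j + n then (-1) ^ (n - (j + n) / 2) * (n.choose ((j + n) / 2) : ℝ) else 0)) := by
  rw [legendre, coeff_C_mul, coeff_iterate_derivative, legendre_coeff_aux, nsmul_eq_mul]

lemma leg_legendre : Leg (fun n => C (legc n)⁻¹ * legendre n) := by
  refine ⟨?_, ?_, ?_, ?_, ?_⟩
  · intro n j h
    rw [coeff_C_mul, legendre_coeff]
    split_ifs with h2
    · rw [Nat.choose_eq_zero_of_lt (by omega)]; simp
    · simp
  · intro n
    rw [coeff_C_mul, legendre_coeff, if_pos (by omega)]
    have e : (n + n) / 2 = n := by omega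
    rw [e, inv_mul_eq_one₀ (legc_pos n).ne', legc]
    simp [two_mul]
  · intro n j h
    rw [coeff_C_mul, legendre_coeff, if_neg]
    · simp
    · rw [Nat.odd_iff] at h; omega
  · intro n
    have := legc_pos (n + 2)
    rw [coeff_C_mul, legendre_coeff, if_pos (by omega)]
    have e : (n + (n + 2)) / 2 = n + 1 := by omega
    have e2 : n + 2 - (n + 1) = 1 := by omega
    have h1 : 0 < (n + (n + 2)).descFactorial (n + 2) := Nat.descFactorial_pos.2 (by omega)
    have h2 : 0 < (n + 2).choose (n + 1) := Nat.choose_pos (by omega)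
    rw [e, e2]
    have : 0 < (legc (n + 2))⁻¹ * (1 / (2 ^ (n + 2) * (n + 2).factorial : ℝ) *
      (((n + (n + 2)).descFactorial (n + 2) : ℝ) * ((n + 2).choose (n + 1) : ℝ))) := by positivity
    linarith
  · intro n
    have := legc_pos (n + 4)
    rw [coeff_C_mul, legendre_coeff, if_pos (by omega)]
    have e : (n + (n + 4)) / 2 = n + 2 := by omega
    have e2 : n + 4 - (n + 2) = 2 := by omega
    have h1 : 0 < (n + (n + 4)).descFactorial (n + 4) := Nat.descFactorial_pos.2 (by omega)
    have h2 : 0 < (n + 4).choose (n + 2) := Nat.choose_pos (by omega)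
    rw [e, e2]
    have : ((-1 : ℝ)) ^ 2 = 1 := by norm_num
    rw [this]
    positivity

lemma isMS_rescale {q : ℕ → ℝ[X]} {γ : ℕ → ℝ} (h : IsMultiplierSeqFor q γ) (c : ℕ → ℝ) :
    IsMultiplierSeqFor (fun n => C (c n) * q n) γ := by
  intro n a ha
  have e : ∀ b : ℕ → ℝ, ∑ k ∈ Finset.range n, C (b k) * (C (c k) * q k) =
      ∑ k ∈ Finset.range n, C (b k * c k) * q k := by
    intro b
    refine Finset.sum_congr rfl fun k _ => ?_
    rw [map_mul, mul_assoc]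
  rw [e] at ha ⊢
  have := h n _ ha
  simpa only [mul_assoc] using this

/-- The diagonal operator attached to a multiplier sequence. -/
structure DOp (q : ℕ → ℝ[X]) (γ : ℕ → ℝ) (T : ℝ[X] →ₗ[ℝ] ℝ[X]) : Prop where
  diag : ∀ k, T (q k) = γ k • q k
  hyp : ∀ p, Hyperbolic p → Hyperbolic (T p)
  low : ∀ m, ∀ p : ℝ[X], (∀ j, m ≤ j → p.coeff j = 0) → ∀ j, m ≤ j → (T p).coeff j = 0

lemma exists_DOp {q : ℕ → ℝ[X]} (hq : Leg q) {γ : ℕ → ℝ} (h : IsMultiplierSeqFor q γ) :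
    ∃ T, DOp q γ T := by
  have hdeg : ∀ i, (q i).degree = i := by
    intro i
    apply le_antisymm
    · rw [degree_le_iff_coeff_zero]
      intro m hm
      exact hq.deg _ _ (by exact_mod_cast hm)
    · apply le_degree_of_ne_zero
      rw [hq.lead]; norm_num
  let S : Polynomial.Sequence ℝ := ⟨q, hdeg⟩
  have hu : ∀ i, IsUnit (S i).leadingCoeff := by
    intro i
    have : (S i).leadingCoeff = 1 := by
      have hn : (q i).natDegree = i := natDegree_eq_of_degree_eq_some (hdeg i)
      change (q i).coeff (q i).natDegree = 1
      rw [hn, hq.lead]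
    rw [this]; exact isUnit_one
  let B := S.basis hu
  have hB : ∀ i, B i = q i := fun i => by simp [B]; rfl
  let T := B.constr ℝ (fun k => γ k • q k)
  have hT : ∀ k, T (q k) = γ k • q k := by
    intro k
    rw [← hB k, Module.Basis.constr_basis, hB]
  refine ⟨T, hT, ?_, ?_⟩
  · intro p hp
    obtain ⟨n, hn⟩ := (B.repr p).support.exists_nat_subset_range
    have e : p = ∑ k ∈ Finset.range n, C (B.repr p k) * q k := by
      conv_lhs => rw [← B.linearCombination_repr p]
      rw [Finsupp.linearCombination_apply, Finsupp.sum_of_support_subset _ hn _ (by simp)]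
      refine Finset.sum_congr rfl fun k _ => ?_
      rw [hB, smul_eq_C_mul]
    have e2 : T p = ∑ k ∈ Finset.range n, C (γ k * B.repr p k) * q k := by
      conv_lhs => rw [e]
      rw [map_sum]
      refine Finset.sum_congr rfl fun k _ => ?_
      rw [← smul_eq_C_mul, map_smul, hT, smul_smul, smul_eq_C_mul, mul_comm (B.repr p k)]
    rw [e2]
    apply h
    rw [← e]; exact hp
  · intro m
    induction m with
    | zero =>
      intro p hp
      have : p = 0 := by ext j; simpa using hp j (by omega)
      simp [this]
    | succ m ih =>
      intro p hp j hj
      have e : p = (p - p.coeff m • q m) + p.coeff m • q m := by ring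
      rw [e, map_add, map_smul, hT, coeff_add, ih _ _ _ (by omega), zero_add, coeff_smul, coeff_smul,
        hq.deg _ _ (by omega)]
      · simp
      · intro i hi
        rw [coeff_sub, coeff_smul]
        rcases hi.eq_or_lt with rfl | hi
        · rw [hq.lead]; simp
        · rw [hq.deg _ _ hi, hp _ (by omega)]; simp

lemma DOp.mono {q : ℕ → ℝ[X]} (hq : Leg q) {γ : ℕ → ℝ} {T} (hT : DOp q γ T) (k : ℕ) :
    (T (X ^ k)).coeff k = γ k := by
  have e : (X ^ k : ℝ[X]) = (X ^ k - q k) + q k := by ring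
  rw [e, map_add, hT.diag, coeff_add, coeff_smul, hq.lead, hT.low k _ _ k le_rfl]
  · simp
  · intro j hj
    rw [coeff_sub, coeff_X_pow]
    rcases hj.eq_or_lt with rfl | hj
    · simp [hq.lead]
    · rw [hq.deg _ _ hj, if_neg (by omega)]; simp

lemma DOp.mono_gt {q : ℕ → ℝ[X]} {γ : ℕ → ℝ} {T} (hT : DOp q γ T) {k j : ℕ} (h : k < j) :
    (T (X ^ k)).coeff j = 0 := by
  apply hT.low (k + 1) _ _ j (by omega)
  intro i hi
  rw [coeff_X_pow, if_neg (by omega)]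

lemma Hyperbolic.dil {p : ℝ[X]} (h : Hyperbolic p) {c : ℝ} (hc : c ≠ 0) :
    Hyperbolic (p.comp (C c * X)) := by
  rw [hyp_iff] at *
  rcases h with h | h
  · left; simp [h]
  · right
    intro z hz
    rw [aeval_comp] at hz
    have := h _ hz
    have e : aeval z (C c * X) = (c : ℂ) * z := by simp
    rw [e, Complex.im_ofReal_mul] at this
    simpa [hc] using this

lemma DOp.classical {q : ℕ → ℝ[X]} (hq : Leg q) {γ : ℕ → ℝ} {T} (hT : DOp q γ T) (p Q : ℝ[X])
    (hp : Hyperbolic p) (hQ : ∀ k, Q.coeff k = γ k * p.coeff k) : Hyperbolic Q := by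
  obtain ⟨ε, hε, hlim0⟩ : ∃ ε : ℕ → ℝ, (∀ i, ε i ≠ 0) ∧ Filter.Tendsto ε Filter.atTop (nhds 0) := by
    refine ⟨fun i => 1 / ((i : ℝ) + 1), fun i => ?_, tendsto_one_div_add_atTop_nhds_zero_nat⟩
    have : (0 : ℝ) < 1 / ((i : ℝ) + 1) := by positivity
    exact this.ne'
  let N := p.natDegree + 1
  have hpN : ∀ j, N ≤ j → p.coeff j = 0 := fun j hj => coeff_eq_zero_of_natDegree_lt (by omega)
  let F : ℕ → ℝ[X] := fun i => (T (p.comp (C (ε i) * X))).comp (C (ε i)⁻¹ * X)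
  have hFc : ∀ i j, (F i).coeff j = (T (p.comp (C (ε i) * X))).coeff j * ((ε i)⁻¹) ^ j := by
    intro i j
    simp only [F, comp_C_mul_X_coeff]
  have hnd : ∀ r : ℝ[X], (∀ j, N ≤ j → r.coeff j = 0) → r.natDegree < N := by
    intro r hr
    have : r.natDegree ≤ p.natDegree := natDegree_le_iff_coeff_eq_zero.2 fun j hj => hr j (by omega)
    omega
  refine hyp_closed F Q N ?_ ?_ ?_ ?_
  · intro i
    apply hnd
    intro j hj
    rw [hFc, hT.low N _ _ j hj, zero_mul]
    intro l hl
    rw [comp_C_mul_X_coeff, hpN l hl, zero_mul]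
  · apply hnd
    intro j hj
    rw [hQ, hpN j hj, mul_zero]
  · refine Filter.Eventually.of_forall fun i => ?_
    exact (hT.hyp _ (hp.dil (hε i))).dil (inv_ne_zero (hε i))
  · intro j hj
    have e : ∀ i, (F i).coeff j = ∑ k ∈ Finset.range N,
        p.coeff k * (ε i ^ k * ((ε i)⁻¹) ^ j * (T (X ^ k)).coeff j) := by
      intro i
      rw [hFc]
      have : p.comp (C (ε i) * X) = ∑ k ∈ Finset.range N, (p.coeff k * ε i ^ k) • X ^ k := by
        ext l
        simp only [comp_C_mul_X_coeff, finsetSum_coeff, coeff_smul, coeff_X_pow, smul_eq_mul, mul_ite,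
          mul_one, mul_zero]
        rw [Finset.sum_ite_eq]
        split_ifs with hl
        · rfl
        · rw [hpN l (by simpa using hl), zero_mul]
      rw [this, map_sum, finsetSum_coeff, Finset.sum_mul]
      refine Finset.sum_congr rfl fun k _ => ?_
      rw [map_smul, coeff_smul, smul_eq_mul]; ring
    simp only [e]
    have e2 : Q.coeff j = ∑ k ∈ Finset.range N, p.coeff k * (if k = j then γ j else 0) := by
      rw [hQ]
      simp only [mul_ite, mul_zero]
      rw [Finset.sum_ite_eq', if_pos (Finset.mem_range.2 hj), mul_comm]
    rw [e2]
    apply tendsto_finsetSum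
    intro k _
    apply Filter.Tendsto.const_mul
    split_ifs with hk
    · subst hk
      refine tendsto_const_nhds.congr fun i => ?_
      rw [hT.mono hq, inv_pow, mul_inv_cancel₀ (pow_ne_zero _ (hε i)), one_mul]
    · rcases lt_or_gt_of_ne hk with hk | hk
      · rw [hT.mono_gt hk]; simp
      · have h1 : Filter.Tendsto (fun i => ε i ^ (k - j) * (T (X ^ k)).coeff j) Filter.atTop
            (nhds (0 ^ (k - j) * (T (X ^ k)).coeff j)) := (hlim0.pow _).mul_const _
        rw [zero_pow (by omega), zero_mul] at h1
        refine h1.congr fun i => ?_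
        congr 1
        rw [inv_pow, ← pow_sub₀ _ (hε i) hk.le]

lemma Hyperbolic.of_X_pow_mul {p : ℝ[X]} {m : ℕ} (h : Hyperbolic (X ^ m * p)) : Hyperbolic p := by
  rw [hyp_iff] at *
  rcases h with h | h
  · left; simpa using h
  · right
    intro z hz
    apply h; simp [hz]

lemma DOp.jensen {q : ℕ → ℝ[X]} (hq : Leg q) {γ : ℕ → ℝ} {T} (hT : DOp q γ T) (m n : ℕ) :
    Hyperbolic (Jn n (fun k => γ (m + k))) := by
  refine (hT.classical hq (X ^ m * (X + C 1) ^ n) (X ^ m * Jn n (fun k => γ (m + k))) ?_ ?_).of_X_pow_mul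
  · exact (hyp_X.pow m).mul ((hyp_lin 1).pow n)
  · intro k
    rw [coeff_X_pow_mul', coeff_X_pow_mul']
    split_ifs with hk
    · rw [Jn_coeff, coeff_X_add_C_pow, Nat.add_sub_cancel' hk]
      simp [mul_comm]
    · simp

lemma hyp_top {p : ℝ[X]} (h : Hyperbolic p) (N : ℕ) (h0 : ∀ j, N + 2 < j → p.coeff j = 0)
    (h1 : p.coeff (N + 1) = 0) : p.coeff (N + 2) * p.coeff N ≤ 0 := by
  have h2 := h.iterate_deriv N
  have e : derivative^[N] p = C ((N.descFactorial N : ℝ) * p.coeff N) + C (2 * 0) * X +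
      C (((2 + N).descFactorial N : ℝ) * p.coeff (N + 2)) * X ^ 2 := by
    ext j
    rw [coeff_iterate_derivative, nsmul_eq_mul]
    simp only [mul_zero, map_zero, zero_mul, add_zero, coeff_add, coeff_C, coeff_C_mul, coeff_X_pow]
    rcases j with _ | _ | _ | j
    · simp
    · simp [add_comm 1 N, h1]
    · simp [add_comm 2 N]
    · rw [h0 _ (by omega)]; simp
  rw [e] at h2
  have h3 := hyp_quad _ _ _ h2
  have p1 : 0 < N.descFactorial N := Nat.descFactorial_pos.2 (by omega)
  have p2 : 0 < (2 + N).descFactorial N := Nat.descFactorial_pos.2 (by omega)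
  have p3 : (0 : ℝ) < (N.descFactorial N : ℝ) * ((2 + N).descFactorial N : ℝ) := by positivity
  by_contra hc
  push Not at hc
  have := mul_pos p3 hc
  nlinarith

lemma DOp.F1 {q : ℕ → ℝ[X]} (hq : Leg q) {γ : ℕ → ℝ} {T} (hT : DOp q γ T) (k : ℕ) :
    0 ≤ γ k * γ (k + 2) := by
  have h := hT.classical hq (X ^ k * (X ^ 2 - C 1)) (C (γ (k + 2)) * X ^ (k + 2) - C (γ k) * X ^ k)
    ((hyp_X.pow k).mul (hyp_sq_sub 1 (by norm_num))) (by
      intro j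
      have : (X ^ k * (X ^ 2 - C 1) : ℝ[X]) = X ^ (k + 2) - X ^ k := by simp; ring
      rw [this]
      simp only [coeff_sub, coeff_C_mul, coeff_X_pow]
      split_ifs with h1 h2 h2
      · omega
      · simp [h1]
      · simp [h2]
      · simp)
  have := hyp_top h k (fun j hj => by
    simp only [coeff_sub, coeff_C_mul, coeff_X_pow]; rw [if_neg (by omega), if_neg (by omega)]; simp)
    (by simp [coeff_X_pow])
  simp [coeff_X_pow] at this
  nlinarith

lemma DOp.F2 {q : ℕ → ℝ[X]} (hq : Leg q) {γ : ℕ → ℝ} {T} (hT : DOp q γ T) (k : ℕ) :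
    γ k * γ (k + 2) ≤ γ (k + 1) ^ 2 := by
  have h := hT.jensen hq k 2
  apply hyp_quad
  convert h using 1
  ext j
  rw [Jn_coeff]
  simp only [coeff_add, coeff_C, coeff_C_mul, coeff_X_pow, coeff_X]
  rcases j with _ | _ | _ | j
  · simp
  · simp
  · simp
  · rw [Nat.choose_eq_zero_of_lt (by omega)]; simp

lemma DOp.F3 {q : ℕ → ℝ[X]} (hq : Leg q) {γ : ℕ → ℝ} {T} (hT : DOp q γ T) (k : ℕ) :
    0 ≤ γ (k + 2) * (γ (k + 2) - γ k) := by
  set β := (q (k + 2)).coeff k with hβ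
  have hβ0 := hq.sec k
  have o1 : (q (k + 2)).coeff (k + 1) = 0 := hq.par _ _ ⟨k + 1, by ring⟩
  have e : (X ^ (k + 2) : ℝ[X]) = (X ^ (k + 2) - q (k + 2) + β • q k) + (q (k + 2) - β • q k) := by ring
  have hlow : ∀ j, k ≤ j → (T (X ^ (k + 2) - q (k + 2) + β • q k)).coeff j = 0 := by
    apply hT.low
    intro j hj
    simp only [coeff_add, coeff_sub, coeff_smul, coeff_X_pow, smul_eq_mul]
    obtain ⟨i, rfl⟩ := Nat.exists_eq_add_of_le hj
    rcases i with _ | _ | _ | i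
    · simp [hq.lead, ← hβ]
    · simp [o1, hq.deg k (k + 1) (by omega)]
    · simp [hq.lead, hq.deg k (k + 2) (by omega)]
    · rw [hq.deg _ _ (by omega), hq.deg _ _ (by omega), if_neg (by omega)]; simp
  have hc : ∀ j, k ≤ j → (T (X ^ (k + 2))).coeff j =
      γ (k + 2) * (q (k + 2)).coeff j - β * (γ k * (q k).coeff j) := by
    intro j hj
    rw [e, map_add, coeff_add, hlow j hj, map_sub, map_smul, hT.diag, hT.diag]
    simp
  have := hyp_top (hT.hyp _ (hyp_X.pow (k + 2))) k (fun j hj => hT.mono_gt hj) (by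
    rw [hc _ (by omega), o1, hq.deg k (k + 1) (by omega)]; simp)
  rw [hc _ (by omega), hc _ le_rfl, hq.lead, hq.lead, hq.deg k (k + 2) (by omega), ← hβ] at this
  by_contra hcon
  push Not at hcon
  nlinarith [mul_pos_of_neg_of_neg hβ0 hcon]

lemma DOp.F4 {q : ℕ → ℝ[X]} (hq : Leg q) {γ : ℕ → ℝ} {T} (hT : DOp q γ T) (k : ℕ)
    (hu : 0 < γ k * γ (k + 2)) : γ (k + 4) ≠ 0 := by
  intro hz
  set b := -(q (k + 4)).coeff (k + 2) with hb
  have hb0 : 0 < b := by have := hq.sec (k + 2); linarith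
  set b' := -(q (k + 2)).coeff k with hb'
  have hb'0 : 0 < b' := by have := hq.sec k; linarith
  set e := (q (k + 4)).coeff k with he
  have he0 : 0 < e := hq.thr k
  have hv : γ (k + 2) ≠ 0 := by rintro h; simp [h] at hu
  set η := e * (γ k * γ (k + 2)) / (b' * γ (k + 2) ^ 2) with hη
  have hη0 : 0 < η := by positivity
  set c := -e - η * b' with hcdef
  have o1 : (q (k + 4)).coeff (k + 1) = 0 := hq.par _ _ ⟨k + 2, by ring⟩
  have o2 : (q (k + 4)).coeff (k + 3) = 0 := hq.par _ _ ⟨k + 3, by ring⟩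
  have o3 : (q (k + 2)).coeff (k + 1) = 0 := hq.par _ _ ⟨k + 1, by ring⟩
  have c1 : (q (k + 4)).coeff (k + 2) = -b := by rw [hb]; ring
  have c2 : (q (k + 2)).coeff k = -b' := by rw [hb']; ring
  set P : ℝ[X] := X ^ (k + 2) * (X ^ 2 - C (b + η)) with hP
  have hPe : P = X ^ (k + 4) - C (b + η) * X ^ (k + 2) := by rw [hP]; ring
  have hPh : Hyperbolic P := (hyp_X.pow _).mul (hyp_sq_sub _ (by positivity))
  have hlow : ∀ j, k ≤ j → (T (P - q (k + 4) + η • q (k + 2) - c • q k)).coeff j = 0 := by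
    apply hT.low
    intro j hj
    simp only [hPe, coeff_add, coeff_sub, coeff_smul, coeff_X_pow, coeff_C_mul, smul_eq_mul]
    obtain ⟨i, rfl⟩ := Nat.exists_eq_add_of_le hj
    rcases i with _ | _ | _ | _ | _ | i
    · simp [hq.lead, ← he, c2, hcdef]
    · simp [o1, o3, hq.deg k (k + 1) (by omega)]
    · simp [hq.lead, c1, hq.deg k (k + 2) (by omega)]
    · simp [o2, hq.deg k (k + 3) (by omega), hq.deg (k + 2) (k + 3) (by omega)]
    · simp [hq.lead, hq.deg k (k + 4) (by omega), hq.deg (k + 2) (k + 4) (by omega)]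
    · rw [hq.deg _ _ (by omega), hq.deg _ _ (by omega), hq.deg _ _ (by omega), if_neg (by omega),
        if_neg (by omega)]; simp
  have hc : ∀ j, k ≤ j → (T P).coeff j =
      - (η * (γ (k + 2) * (q (k + 2)).coeff j)) + c * (γ k * (q k).coeff j) := by
    intro j hj
    have e1 : P = (P - q (k + 4) + η • q (k + 2) - c • q k) +
      (q (k + 4) - η • q (k + 2) + c • q k) := by ring
    rw [e1, map_add, coeff_add, hlow j hj, map_add, map_sub, map_smul, map_smul, hT.diag, hT.diag,
      hT.diag, hz]
    simp
  have := hyp_top (hT.hyp _ hPh) k (fun j hj => by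
    rw [hc _ (by omega), hq.deg _ _ hj, hq.deg k j (by omega)]; simp) (by
    rw [hc _ (by omega), o3, hq.deg k (k + 1) (by omega)]; simp)
  rw [hc _ (by omega), hc _ le_rfl, hq.lead, hq.lead, hq.deg k (k + 2) (by omega), c2] at this
  have hkey : η * b' * γ (k + 2) ^ 2 = e * (γ k * γ (k + 2)) := by
    rw [hη]; field_simp
  have h5 : 0 < η * (η * b' * (γ k * γ (k + 2))) := by positivity
  rw [hcdef] at this
  have h6 : -(η * (γ (k + 2) * 1)) + (-e - η * b') * (γ k * 0) = -η * γ (k + 2) := by ring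
  rw [h6] at this
  have h7 : -η * γ (k + 2) * (-(η * (γ (k + 2) * -b')) + (-e - η * b') * (γ k * 1)) =
    -η * (η * b' * γ (k + 2) ^ 2) + η * (e * (γ k * γ (k + 2))) + η * (η * b' * (γ k * γ (k + 2))) := by
    ring
  rw [h7, hkey] at this
  linarith

lemma not_hyp_gap (a b : ℝ) (ha : a ≠ 0) (hb : b ≠ 0) (N : ℕ) (hN : 3 ≤ N) :
    ¬ Hyperbolic (C a + C b * X ^ N) := by
  intro h
  rw [hyp_iff] at h
  rcases h with h | h
  · have := congrArg (fun p => coeff p 0) h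
    simp [coeff_X_pow, show (0 : ℕ) ≠ N by omega] at this
    exact ha this
  · have hb' : (b : ℂ) ≠ 0 := by exact_mod_cast hb
    have ha' : (a : ℂ) ≠ 0 := by exact_mod_cast ha
    obtain ⟨z, hz⟩ := IsAlgClosed.exists_pow_nat_eq (-(a : ℂ) / b) (n := N) (by omega)
    have hz1 := h z (by simp [hz]; field_simp; simp)
    have hN0 : N ≠ 0 := by omega
    have hζ := (Complex.isPrimitiveRoot_exp N hN0).pow_eq_one
    set ζ := Complex.exp (2 * Real.pi * Complex.I / N) with hζd
    have hz2 := h (z * ζ) (by simp [mul_pow, hz, hζ]; field_simp; simp)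
    have hz0 : z ≠ 0 := by
      rintro rfl
      rw [zero_pow hN0] at hz
      have : -(a : ℂ) / b ≠ 0 := div_ne_zero (neg_ne_zero.2 ha') hb'
      exact this hz.symm
    have hre : z.re ≠ 0 := fun h => hz0 (Complex.ext h hz1)
    rw [Complex.mul_im, hz1, zero_mul, add_zero, mul_eq_zero] at hz2
    have him := hz2.resolve_left hre
    have e : (2 * Real.pi * Complex.I / N : ℂ) = ((2 * Real.pi / N : ℝ) : ℂ) * Complex.I := by
      push_cast; ring
    rw [hζd, e, Complex.exp_ofReal_mul_I_im] at him
    have hN' : (3 : ℝ) ≤ N := by exact_mod_cast hN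
    have := Real.sin_pos_of_pos_of_lt_pi (x := 2 * Real.pi / N) (by have := Real.pi_pos; positivity) (by
      rw [div_lt_iff₀ (by linarith)]
      nlinarith [Real.pi_pos])
    linarith

lemma DOp.F5 {q : ℕ → ℝ[X]} (hq : Leg q) {γ : ℕ → ℝ} {T} (hT : DOp q γ T) (k : ℕ)
    (hk : γ k ≠ 0) (hk1 : γ (k + 1) = 0) (N : ℕ) : γ (k + (N + 1)) = 0 := by
  induction N using Nat.strong_induction_on with
  | _ N ih =>
    rcases N with _ | _ | N
    · exact hk1
    · have h1 := hT.F1 hq k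
      have h2 := hT.F2 hq k
      rw [hk1] at h2
      have : γ k * γ (k + 2) = 0 := by nlinarith
      exact (mul_eq_zero.1 this).resolve_left hk
    · by_contra hne
      have h := hT.jensen hq k (N + 2 + 1)
      have e : Jn (N + 2 + 1) (fun j => γ (k + j)) = C (γ k) + C (γ (k + (N + 2 + 1))) * X ^ (N + 2 + 1) := by
        ext j
        rw [Jn_coeff]
        simp only [coeff_add, coeff_C, coeff_C_mul, coeff_X_pow]
        rcases j with _ | j
        · simp
        · rcases lt_trichotomy j (N + 2) with hj | rfl | hj
          · rw [ih j hj, if_neg (by omega), if_neg (by omega)]; simp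
          · simp
          · rw [Nat.choose_eq_zero_of_lt (by omega), if_neg (by omega), if_neg (by omega)]; simp
      rw [e] at h
      exact not_hyp_gap _ _ hk hne _ (by omega) h

lemma st_He_comb (k : ℕ) (hk : St (HeC k)) (a b : ℝ) : St (C (a : ℂ) * HeC k + C (b : ℂ) * HeC (k + 1)) := by
  have hne : HeC k ≠ 0 := by
    intro h
    have := HeC_coeff_self k
    rw [h] at this; simp at this
  have hf := hk.resolve_left hne
  by_cases hb : b = 0
  · by_cases ha : a = 0
    · left; simp [ha, hb]
    · right
      intro z hz
      have := hf z hz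
      simp [hb, ha, this]
  · right
    intro z hz h0
    have hfz := hf z hz
    have hb' : (b : ℂ) ≠ 0 := by exact_mod_cast hb
    have h2 := (logder_im hf z hz).1
    have h3 : ((a / b : ℝ) : ℂ) + z - (derivative (HeC k)).eval z / (HeC k).eval z = 0 := by
      rw [HeC_succ] at h0
      simp only [eval_add, eval_mul, eval_C, eval_sub, eval_X] at h0
      push_cast
      field_simp
      linear_combination h0
    have h4 := congrArg Complex.im h3
    simp only [Complex.sub_im, Complex.add_im, Complex.zero_im, Complex.ofReal_im] at h4
    linarith

lemma st_HeC (k : ℕ) : St (HeC k) := by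
  induction k with
  | zero => right; intro z _; simp [HeC]
  | succ k ih => simpa using st_He_comb k ih 0 1

lemma hyp_He_comb (k : ℕ) (a b : ℝ) : Hyperbolic (C a * hermiteR k + C b * hermiteR (k + 1)) := by
  rw [hyp_iff_st]
  have e : ∀ k, (hermiteR k).map (algebraMap ℝ ℂ) = HeC k := by
    intro k
    rw [hermiteR, HeC, Polynomial.map_map]
    congr 1
  rw [Polynomial.map_add, Polynomial.map_mul, Polynomial.map_mul, e, e, map_C, map_C]
  exact st_He_comb k (st_HeC k) a b

lemma hermite_two_term (γ : ℕ → ℝ) (l : ℕ) (h : ∀ k, k ≠ l → k ≠ l + 1 → γ k = 0) :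
    IsMultiplierSeqFor hermiteR γ := by
  intro n a _
  have e : ∑ k ∈ Finset.range n, C (γ k * a k) * hermiteR k =
      C (if l ∈ Finset.range n then γ l * a l else 0) * hermiteR l +
      C (if l + 1 ∈ Finset.range n then γ (l + 1) * a (l + 1) else 0) * hermiteR (l + 1) := by
    have : ∀ k ∈ Finset.range n, C (γ k * a k) * hermiteR k =
        (if k = l then C (γ k * a k) * hermiteR k else 0) +
        (if k = l + 1 then C (γ k * a k) * hermiteR k else 0) := by
      intro k _
      by_cases h1 : k = l
      · rw [if_pos h1, if_neg (by omega), add_zero]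
      · by_cases h2 : k = l + 1
        · rw [if_neg h1, if_pos h2, zero_add]
        · rw [h k h1 h2]; simp
    rw [Finset.sum_congr rfl this, Finset.sum_add_distrib, Finset.sum_ite_eq', Finset.sum_ite_eq']
    congr 1
    · split_ifs <;> simp
    · split_ifs <;> simp
  rw [e]
  exact hyp_He_comb _ _ _

lemma hermiteR_dil (ε : ℝ) (hε : ε * ε = 1) (k : ℕ) :
    (hermiteR k).comp (C ε * X) = C (ε ^ k) * hermiteR k := by
  ext j
  rw [comp_C_mul_X_coeff, coeff_C_mul, hermiteR, coeff_map]
  by_cases h : Odd (k + j)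
  · rw [coeff_hermite_of_odd_add h]; simp
  · rw [Nat.not_odd_iff_even] at h
    obtain ⟨r, hr⟩ := h
    have h1 : ε ^ k * ε ^ j = 1 := by
      rw [← pow_add, hr, ← two_mul, pow_mul, pow_two, hε, one_pow]
    have h2 : ε ^ j * ε ^ j = 1 := by
      rw [← pow_add, ← two_mul, pow_mul, pow_two, hε, one_pow]
    have h3 : ε ^ j = ε ^ k := by
      calc ε ^ j = (ε ^ k * ε ^ j) * ε ^ j := by rw [h1, one_mul]
        _ = ε ^ k * (ε ^ j * ε ^ j) := by ring
        _ = ε ^ k := by rw [h2, mul_one]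
    rw [h3, mul_comm]

lemma isMS_twist {γ : ℕ → ℝ} (h : IsMultiplierSeqFor hermiteR γ) (ε : ℝ) (hε : ε * ε = 1) :
    IsMultiplierSeqFor hermiteR (fun k => ε ^ k * γ k) := by
  intro n a ha
  have hε0 : ε ≠ 0 := by rintro rfl; simp at hε
  have := (h n a ha).dil hε0
  convert this using 1
  rw [← coe_compRingHom_apply, map_sum]
  refine Finset.sum_congr rfl fun k _ => ?_
  rw [coe_compRingHom_apply, mul_comp, C_comp, hermiteR_dil ε hε]
  simp only [map_mul]; ring

lemma DOp.hermite {q : ℕ → ℝ[X]} (hq : Leg q) {γ : ℕ → ℝ} {T} (hT : DOp q γ T) :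
    IsMultiplierSeqFor hermiteR γ := by
  by_cases hz : ∀ k, γ k = 0
  · exact hermite_two_term γ 0 fun k _ _ => hz k
  push Not at hz
  classical
  let l := Nat.find hz
  have hl : γ l ≠ 0 := Nat.find_spec hz
  have hlt : ∀ k, k < l → γ k = 0 := fun k hk => by
    have := Nat.find_min hz hk
    simpa using this
  clear_value l
  by_cases hA : ∀ k, γ k * γ (k + 2) = 0
  · apply hermite_two_term γ l
    intro k h1 h2
    rcases lt_or_ge k l with hk | hk
    · exact hlt k hk
    have hl2 : γ (l + 2) = 0 := (mul_eq_zero.1 (hA l)).resolve_left hl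
    by_cases hl1 : γ (l + 1) = 0
    · have := hT.F5 hq l hl hl1 (k - l - 1)
      rwa [show l + (k - l - 1 + 1) = k by omega] at this
    · have := hT.F5 hq (l + 1) hl1 hl2 (k - l - 2)
      rwa [show l + 1 + (k - l - 2 + 1) = k by omega] at this
  · push Not at hA
    obtain ⟨k0, hk0⟩ := hA
    have hev : ∀ i, γ (k0 + 2 * i) ≠ 0 ∧ γ (k0 + 2 * i + 2) ≠ 0 := by
      intro i
      induction i with
      | zero => exact ⟨left_ne_zero_of_mul hk0, right_ne_zero_of_mul hk0⟩
      | succ i ih =>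
        refine ⟨ih.2, ?_⟩
        have := hT.F4 hq (k0 + 2 * i)
          (lt_of_le_of_ne (hT.F1 hq _) (Ne.symm (mul_ne_zero ih.1 ih.2)))
        exact this
    have hne : ∀ d, γ (l + d) ≠ 0 := by
      intro d
      induction d with
      | zero => exact hl
      | succ d ih =>
        intro h0
        apply (hev (l + d + 1)).1
        have := hT.F5 hq (l + d) ih h0 (k0 + 2 * (l + d + 1) - (l + d) - 1)
        rwa [show l + d + (k0 + 2 * (l + d + 1) - (l + d) - 1 + 1) = k0 + 2 * (l + d + 1) by omega] at this
    have hpos2 : ∀ d, 0 < γ (l + d) * γ (l + d + 2) := fun d =>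
      lt_of_le_of_ne (hT.F1 hq _) (Ne.symm (mul_ne_zero (hne d) (hne (d + 2))))
    obtain ⟨ε, hε, hε1⟩ : ∃ ε : ℝ, ε * ε = 1 ∧ 0 < ε * (γ l * γ (l + 1)) := by
      rcases lt_or_gt_of_ne (mul_ne_zero hl (hne 1)) with h | h
      · exact ⟨-1, by norm_num, by linarith⟩
      · exact ⟨1, by norm_num, by linarith⟩
    have hεd : ∀ d, 0 < ε * (γ (l + d) * γ (l + d + 1)) := by
      intro d
      induction d with
      | zero => exact hε1
      | succ d ih =>
        have h1 := mul_pos ih (hpos2 d)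
        have h2 : 0 < γ (l + d) ^ 2 := by have := hne d; positivity
        refine pos_of_mul_pos_right (a := γ (l + d) ^ 2) ?_ h2.le
        calc 0 < _ := h1
          _ = _ := by rw [show l + (d + 1) = l + d + 1 by ring]; ring
    have hεp : ∀ k, ε ^ k * ε ^ k = 1 := fun k => by rw [← mul_pow, hε, one_pow]
    have hε0 : ε ≠ 0 := by rintro rfl; simp at hε
    obtain ⟨s, hs, hs1⟩ : ∃ s : ℝ, s * s = 1 ∧ 0 < s * (ε ^ l * γ l) := by
      rcases lt_or_gt_of_ne (mul_ne_zero (pow_ne_zero l hε0) hl) with h | h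
      · exact ⟨-1, by norm_num, by linarith⟩
      · exact ⟨1, by norm_num, by linarith⟩
    let δ : ℕ → ℝ := fun k => s * (ε ^ k * γ k)
    have hδ : ∀ k, δ k = s * (ε ^ k * γ k) := fun k => rfl
    clear_value δ
    have hδd : ∀ d, 0 < δ (l + d) := by
      intro d
      induction d with
      | zero => rw [hδ]; exact hs1
      | succ d ih =>
        have h1 := mul_pos ih (hεd d)
        have h2 : 0 < γ (l + d) ^ 2 := by have := hne d; positivity
        refine pos_of_mul_pos_right (a := γ (l + d) ^ 2) ?_ h2.le
        calc 0 < _ := h1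
          _ = _ := by rw [hδ, hδ, show l + (d + 1) = l + d + 1 by ring]; ring
    have hδlt : ∀ k, k < l → δ k = 0 := fun k hk => by rw [hδ, hlt k hk]; ring
    have hδ0 : ∀ k, 0 ≤ δ k := by
      intro k
      rcases lt_or_ge k l with hk | hk
      · rw [hδlt k hk]
      · have := hδd (k - l)
        rw [Nat.add_sub_cancel' hk] at this
        exact this.le
    have hδm : ∀ k, δ k * δ (k + 2) = γ k * γ (k + 2) := by
      intro k
      rw [hδ, hδ]
      calc _ = (s * s) * (ε ^ k * ε ^ k) * (ε * ε) * (γ k * γ (k + 2)) := by ring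
        _ = _ := by rw [hs, hεp, hε]; ring
    have hδs : ∀ k, δ k ^ 2 = γ k ^ 2 := by
      intro k
      rw [hδ]
      calc _ = (s * s) * (ε ^ k * ε ^ k) * γ k ^ 2 := by ring
        _ = _ := by rw [hs, hεp]; ring
    have hmono : ∀ k, 0 ≤ dl δ k := by
      intro k
      rw [dl, sub_nonneg]
      rcases lt_or_ge k l with hk | hk
      · rw [hδlt k hk]; exact hδ0 _
      · obtain ⟨d, rfl⟩ := Nat.exists_eq_add_of_le hk
        have h3 := hT.F3 hq (l + d)
        have h2 := hT.F2 hq (l + d)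
        have e3 : γ (l + d + 2) * (γ (l + d + 2) - γ (l + d)) =
            δ (l + d + 2) * (δ (l + d + 2) - δ (l + d)) := by
          have a1 := hδm (l + d)
          have a2 := hδs (l + d + 2)
          linear_combination a1 - a2
        rw [e3] at h3
        rw [← hδm, ← hδs] at h2
        have p0 := hδd d
        have p2 : 0 < δ (l + d + 2) := hδd (d + 2)
        have h4 : 0 ≤ δ (l + d + 2) - δ (l + d) := nonneg_of_mul_nonneg_right h3 p2
        have h5 : δ (l + d) ^ 2 ≤ δ (l + d + 1) ^ 2 := by nlinarith
        exact le_of_sq_le_sq h5 (hδ0 _)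
    have hJ : Qs δ := by
      apply Qs_of_jensen
      intro m n
      have := (hyp_C (s * ε ^ m)).mul ((hT.jensen hq m n).dil hε0)
      convert this using 1
      ext j
      rw [coeff_C_mul, comp_C_mul_X_coeff, Jn_coeff, Jn_coeff, hδ, pow_add]
      ring
    have := isMS_smul (isMS_twist (hermite_of_nonneg δ hJ hδ0 hmono) ε hε) s
    convert this using 1
    funext k
    rw [hδ]
    calc γ k = (s * s) * (ε ^ k * ε ^ k) * γ k := by rw [hs, hεp]; ring
      _ = _ := by ring

theorem stmt_9 (γ : ℕ → ℝ) (h : IsLegendreMS γ) :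
    IsMultiplierSeqFor hermiteR γ := by
  obtain ⟨T, hT⟩ := exists_DOp leg_legendre (isMS_rescale h (fun n => (legc n)⁻¹))
  exact hT.hermite leg_legendre
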